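/- arXiv:2105.06513 — 2 statements merged into one kernel-verified Lean document; each statement's English description precedes it below -/
import Mathlib

section
/- Let g ≥ 2 and b > 1 be integers with gcd(b,g) = 1, let a be a positive integer with gcd(a,b) = 1 and a < b^k, let j ≥ 1 and k ≥ c_g(b). Let t_0 = min{ t ≥ 1 : b^t ≡ 1 (mod g^j) } be the multiplicative order of b modulo g^j. Then for all s, s' ∈ {0,…,g^j−1}: ν_k(s) − ν_k(s') = ν_{k+t_0}(s) − ν_{k+t_0}(s') (as integers). -/
/-- `ordg g m = min {n ≥ 1 : g^n ≡ 1 (mod m)}`, the multiplicative order of `g` modulo `m`. -/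
noncomputable def ordg (g m : ℕ) : ℕ := sInf {n : ℕ | 0 < n ∧ g ^ n ≡ 1 [MOD m]}

/-- `cg g b` is the least `c ≥ 1` such that `ord_g(b^{c+t}) = b^t·ord_g(b^c)` for all `t ≥ 1`. -/
noncomputable def cg (g b : ℕ) : ℕ :=
  sInf {c : ℕ | 0 < c ∧ ∀ t : ℕ, 0 < t → ordg g (b ^ (c + t)) = b ^ t * ordg g (b ^ c)}

/-- `nu g b a j k s` is the absolute frequency of the `j`-word `s` in the enlarged
repetend of `a/b^k`. -/
noncomputable def nu (g b a j k s : ℕ) : ℕ :=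
  ((Finset.Icc j (ordg g (b ^ k) + j - 1)).filter
    (fun i => (a * g ^ i / b ^ k) % g ^ j = s)).card

/-!
Lifting the exponent at the primes dividing `b` gives, for `n ≥ 2` and `K = g ^ ord_g(b ^ 2) - 1`,
`ord_g(b ^ n) = ord_g(b ^ 2) * (b ^ n / gcd (b ^ n) K)`. The gcd is eventually constant in `n`, so
`c_g(b)` exists, and from there on the order grows by the full factor `b` at each step.

Write `G = g ^ j`. Since `G ∣ a * g ^ i` for `i ≥ j`, the `j`-word of `a / b ^ k` ending at place
`i` is determined by the remainder `r` of `a * g ^ i` modulo `b ^ k`: it is `s` iff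
`G ∣ b ^ k * s + r`. This condition on `r` does not change when `k` is replaced by `k + t` with
`b ^ t ≡ 1 [MOD G]`. For `k ≥ c_g(b)` the order of `g` grows by the full factor `b ^ t`, so the
remainders modulo `b ^ (k + t)` are all the lifts `r + b ^ k * n` with `n < b ^ t`. Writing
`b ^ t = G * w + 1`, the `G * w` values `n ≥ 1` satisfy the condition exactly `w` times, whatever
`r` and `s` are, and `n = 0` reproduces the condition at level `k`. So every frequency grows by the
same amount, `w` times the period of `a / b ^ k`.
-/

theorem pos_of_coprime {m n : ℕ} (hm : m ≠ 1) (h : Nat.Coprime m n) : 0 < n :=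
  Nat.pos_of_ne_zero fun hn => hm (by rwa [hn, Nat.coprime_zero_right] at h)

theorem ordg_eq_orderOf (g m : ℕ) : ordg g m = orderOf (g : ZMod m) := by
  rw [orderOf, Function.minimalPeriod_eq_sInf_n_pos_IsPeriodicPt, ordg]
  simp only [isPeriodicPt_mul_iff_pow_eq_one, ← ZMod.natCast_eq_natCast_iff, Nat.cast_pow,
    Nat.cast_one, gt_iff_lt]

theorem isOfFinOrder_natCast {g m : ℕ} (h : Nat.Coprime g m) : IsOfFinOrder (g : ZMod m) :=
  ((ZMod.isUnit_iff_coprime g m).2 h).isOfFinOrder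

theorem ordg_pos {g m : ℕ} (h : Nat.Coprime g m) : 0 < ordg g m := by
  rw [ordg_eq_orderOf]
  exact (isOfFinOrder_natCast h).orderOf_pos

theorem pow_ordg_modEq_one (g m : ℕ) : g ^ ordg g m ≡ 1 [MOD m] := by
  rw [← ZMod.natCast_eq_natCast_iff, ordg_eq_orderOf]
  push_cast
  exact pow_orderOf_eq_one _

theorem pow_modEq_pow_iff {g m : ℕ} (h : Nat.Coprime g m) {i i' : ℕ} :
    g ^ i ≡ g ^ i' [MOD m] ↔ i ≡ i' [MOD ordg g m] := by
  rw [ordg_eq_orderOf, ← (isOfFinOrder_natCast h).pow_eq_pow_iff_modEq,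
    ← ZMod.natCast_eq_natCast_iff]
  push_cast
  rfl

theorem ordg_eq_ordg_mul_ordg_pow {g l m : ℕ} (hlm : l ∣ m) (hg : Nat.Coprime g l) :
    ordg g m = ordg g l * ordg (g ^ ordg g l) m := by
  have hdvd : ordg g l ∣ orderOf (g : ZMod m) := by
    simpa [ordg_eq_orderOf] using
      orderOf_map_dvd (ZMod.castHom hlm (ZMod l)).toMonoidHom (g : ZMod m)
  rw [ordg_eq_orderOf g m, ordg_eq_orderOf (g ^ _) m, Nat.cast_pow,
    orderOf_pow_of_dvd (ordg_pos hg).ne' hdvd, Nat.mul_div_cancel' hdvd]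

/-! ### Growth of the order along the powers of `b` -/

-- The square is what lifting the exponent requires at `p = 2`.
theorem emultiplicity_pow_sub_one {p : ℕ} (hp : p.Prime) {x : ℤ} (hx : (p : ℤ) ^ 2 ∣ x - 1)
    (n : ℕ) : emultiplicity (p : ℤ) (x ^ n - 1) = emultiplicity (p : ℤ) ((x - 1) * n) := by
  have hpx1 : (p : ℤ) ∣ x - 1 := (dvd_pow_self _ two_ne_zero).trans hx
  have hpx : ¬ (p : ℤ) ∣ x := fun h =>
    (Nat.prime_iff_prime_int.1 hp).not_dvd_one (by simpa using dvd_sub h hpx1)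
  rw [emultiplicity_mul (Nat.prime_iff_prime_int.1 hp)]
  rcases hp.eq_two_or_odd' with rfl | hodd
  · simpa using Int.two_pow_sub_pow' (y := 1) n (by simpa using hx) hpx
  · simpa [Int.natCast_emultiplicity] using
      Int.emultiplicity_pow_sub_pow hp hodd (y := 1) hpx1 hpx n

theorem succ_pow_modEq_one_iff {K d : ℕ} (hK : ∀ p, p.Prime → p ∣ d → p ^ 2 ∣ K) (n : ℕ) :
    (K + 1) ^ n ≡ 1 [MOD d] ↔ d ∣ K * n := by
  have hpow (q : ℕ) : q ∣ (K + 1) ^ n - 1 ↔ (q : ℤ) ∣ ((K : ℤ) + 1) ^ n - 1 := by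
    rw [← Int.natCast_dvd_natCast]
    push_cast [Nat.one_le_pow n (K + 1) K.succ_pos]
    rfl
  rw [Nat.ModEq.comm, Nat.modEq_iff_dvd' (Nat.one_le_pow n (K + 1) K.succ_pos),
    Nat.dvd_iff_prime_pow_dvd_dvd, Nat.dvd_iff_prime_pow_dvd_dvd]
  refine forall₄_congr fun p k hp hpk => ?_
  rcases Nat.eq_zero_or_pos k with rfl | hk
  · simp
  have hpK : (p : ℤ) ^ 2 ∣ ((K : ℤ) + 1) - 1 := by
    rw [add_sub_cancel_right]
    exact_mod_cast hK p hp ((dvd_pow_self p hk.ne').trans hpk)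
  rw [hpow, ← Int.natCast_dvd_natCast, Nat.cast_pow, Nat.cast_mul, pow_dvd_iff_le_emultiplicity,
    pow_dvd_iff_le_emultiplicity, emultiplicity_pow_sub_one hp hpK, add_sub_cancel_right]

theorem ordg_succ_eq_div_gcd {K d : ℕ} (hd : d ≠ 0) (hK : ∀ p, p.Prime → p ∣ d → p ^ 2 ∣ K) :
    ordg (K + 1) d = d / d.gcd K := by
  rw [← ZMod.addOrderOf_coe K hd, ordg_eq_orderOf]
  refine Nat.dvd_right_iff_eq.1 fun n => ?_
  rw [orderOf_dvd_iff_pow_eq_one, addOrderOf_dvd_iff_nsmul_eq_zero, nsmul_eq_mul, mul_comm,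
    ← Nat.cast_mul, ZMod.natCast_eq_zero_iff, ← succ_pow_modEq_one_iff hK,
    ← ZMod.natCast_eq_natCast_iff]
  push_cast
  rfl

theorem exists_forall_gcd_pow_eq (b : ℕ) {K : ℕ} (hK : 0 < K) :
    ∃ c, ∀ n, c ≤ n → (b ^ n).gcd K = (b ^ c).gcd K := by
  have hbdd : BddAbove (Set.range fun n => (b ^ n).gcd K) :=
    ⟨K, Set.forall_mem_range.2 fun n => Nat.gcd_le_right (b ^ n) hK⟩
  obtain ⟨_, ⟨c, rfl⟩, hmax⟩ := hbdd.exists_isGreatest_of_nonempty (Set.range_nonempty _)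
  refine ⟨c, fun n hcn => le_antisymm (hmax ⟨n, rfl⟩) ?_⟩
  exact Nat.le_of_dvd (Nat.gcd_pos_of_pos_right _ hK)
    (Nat.gcd_dvd_gcd_of_dvd_left K (pow_dvd_pow b hcn))

theorem exists_ordg_pow_add_eq {g b : ℕ} (hg : 2 ≤ g) (hgb : Nat.Coprime g b) :
    ∃ c, 0 < c ∧ ∀ t, 0 < t → ordg g (b ^ (c + t)) = b ^ t * ordg g (b ^ c) := by
  have hb : b ≠ 0 := (pos_of_coprime (by omega) hgb).ne'
  have hg2 : Nat.Coprime g (b ^ 2) := hgb.pow_right 2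
  have hpow : 1 < g ^ ordg g (b ^ 2) := Nat.one_lt_pow (ordg_pos hg2).ne' hg
  obtain ⟨K, hK⟩ := Nat.exists_eq_add_of_le' hpow.le
  have hbK : b ^ 2 ∣ K := by
    simpa [hK] using (Nat.modEq_iff_dvd' hpow.le).1 (pow_ordg_modEq_one g (b ^ 2)).symm
  have hord (n : ℕ) (hn : 2 ≤ n) :
      ordg g (b ^ n) = ordg g (b ^ 2) * (b ^ n / (b ^ n).gcd K) := by
    rw [ordg_eq_ordg_mul_ordg_pow (pow_dvd_pow b hn) hg2, hK,
      ordg_succ_eq_div_gcd (pow_ne_zero n hb) fun p hp hpn =>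
        (pow_dvd_pow_of_dvd (hp.dvd_of_dvd_pow hpn) 2).trans hbK]
  obtain ⟨c, hc⟩ := exists_forall_gcd_pow_eq b (show 0 < K by omega)
  refine ⟨c + 2, by omega, fun t _ => ?_⟩
  have hgcd : (b ^ (c + 2 + t)).gcd K = (b ^ (c + 2)).gcd K :=
    (hc _ (by omega)).trans (hc _ (by omega)).symm
  have hdiv : b ^ (c + 2 + t) / (b ^ (c + 2)).gcd K =
      b ^ t * (b ^ (c + 2) / (b ^ (c + 2)).gcd K) := by
    rw [pow_add, mul_comm, Nat.mul_div_assoc _ (Nat.gcd_dvd_left _ K)]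
  rw [hord (c + 2 + t) (by omega), hord (c + 2) (by omega), hgcd, hdiv, mul_left_comm]

theorem ordg_pow_add_eq {g b k : ℕ} (hg : 2 ≤ g) (hgb : Nat.Coprime g b) (hk : cg g b ≤ k)
    (t : ℕ) : ordg g (b ^ (k + t)) = b ^ t * ordg g (b ^ k) := by
  have hcg (t : ℕ) : ordg g (b ^ (cg g b + t)) = b ^ t * ordg g (b ^ cg g b) := by
    rcases Nat.eq_zero_or_pos t with rfl | ht
    · simp
    · exact (Nat.sInf_mem (exists_ordg_pow_add_eq hg hgb)).2 t ht
  obtain ⟨d, rfl⟩ := Nat.exists_eq_add_of_le hk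
  rw [add_assoc, hcg, hcg, pow_add]
  ring

/-! ### Remainders -/

/-- The remainders that occur in the base-`g` long division of `a` by `m`. When `g` is coprime to
`m` this is the coset of `a` under the powers of `g` modulo `m`, represented in `{0, …, m - 1}`. -/
noncomputable def remainders (g a m : ℕ) : Finset ℕ :=
  (Finset.range (ordg g m)).image fun i => a * g ^ i % m

theorem mul_modEq_mul_left_iff_of_coprime {m c x y : ℕ} (h : Nat.Coprime m c) :
    c * x ≡ c * y [MOD m] ↔ x ≡ y [MOD m] :=
  ⟨Nat.ModEq.cancel_left_of_coprime h, Nat.ModEq.mul_left c⟩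

section Remainders

variable {g a m : ℕ}

theorem mul_pow_mod_ordg_mod (hg : Nat.Coprime g m) (i : ℕ) :
    a * g ^ (i % ordg g m) % m = a * g ^ i % m :=
  ((pow_modEq_pow_iff hg).2 (Nat.mod_modEq i _)).mul_left a

theorem mul_pow_mod_mem_remainders (hg : Nat.Coprime g m) (i : ℕ) :
    a * g ^ i % m ∈ remainders g a m :=
  Finset.mem_image.2
    ⟨i % ordg g m, Finset.mem_range.2 (Nat.mod_lt i (ordg_pos hg)), mul_pow_mod_ordg_mod hg i⟩

theorem lt_of_mem_remainders (hm : 0 < m) {r : ℕ} (hr : r ∈ remainders g a m) : r < m := by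
  obtain ⟨i, -, rfl⟩ := Finset.mem_image.1 hr
  exact Nat.mod_lt _ hm

theorem image_Ico_eq_remainders (hg : Nat.Coprime g m) (j : ℕ) :
    ((Finset.Ico j (j + ordg g m)).image fun i => a * g ^ i % m) = remainders g a m := by
  rw [remainders, ← Nat.image_Ico_mod j, Finset.image_image]
  exact Finset.image_congr fun i _ => (mul_pow_mod_ordg_mod hg i).symm

theorem injOn_mul_pow_mod (hg : Nat.Coprime g m) (ha : Nat.Coprime a m) (j : ℕ) :
    Set.InjOn (fun i => a * g ^ i % m) (Finset.Ico j (j + ordg g m)) := fun _ hi _ hi' h =>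
  Nat.mod_injOn_Ico j _ hi hi' <|
    (pow_modEq_pow_iff hg).1 ((mul_modEq_mul_left_iff_of_coprime ha.symm).1 h)

theorem card_remainders (hg : Nat.Coprime g m) (ha : Nat.Coprime a m) :
    (remainders g a m).card = ordg g m := by
  rw [← image_Ico_eq_remainders hg 0, Finset.card_image_of_injOn (injOn_mul_pow_mod hg ha 0)]
  simp

theorem injOn_add_mul (m : ℕ) :
    Set.InjOn (fun q : ℕ × ℕ => q.1 + m * q.2) {q | q.1 < m} := by
  rintro ⟨r, n⟩ (hr : r < m) ⟨r', n'⟩ (hr' : r' < m) (h : r + m * n = r' + m * n')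
  obtain rfl : r = r' := by
    simpa [Nat.mod_eq_of_lt hr, Nat.mod_eq_of_lt hr'] using congrArg (· % m) h
  simpa [(Nat.zero_lt_of_lt hr).ne'] using h

variable {d : ℕ}

-- Reduction modulo `m` gives `⊆`; equality is then a comparison of cardinalities.
theorem remainders_mul (hm : 0 < m) (hd : 0 < d) (hg : Nat.Coprime g (m * d))
    (ha : Nat.Coprime a (m * d)) (hord : ordg g (m * d) = d * ordg g m) :
    remainders g a (m * d) =
      (remainders g a m ×ˢ Finset.range d).image fun q => q.1 + m * q.2 := by
  have hgm : Nat.Coprime g m := hg.coprime_mul_right_right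
  have ham : Nat.Coprime a m := ha.coprime_mul_right_right
  refine Finset.eq_of_subset_of_card_le (fun x hx => ?_) ?_
  · have hlt : x < m * d := lt_of_mem_remainders (Nat.mul_pos hm hd) hx
    have hmod : x % m ∈ remainders g a m := by
      obtain ⟨i, -, rfl⟩ := Finset.mem_image.1 hx
      rw [Nat.mod_mul_right_mod]
      exact mul_pow_mod_mem_remainders hgm i
    exact Finset.mem_image.2 ⟨(x % m, x / m),
      Finset.mk_mem_product hmod (Finset.mem_range.2 (Nat.div_lt_of_lt_mul hlt)),
      Nat.mod_add_div x m⟩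
  · calc _ ≤ (remainders g a m ×ˢ Finset.range d).card := Finset.card_image_le
      _ = (remainders g a (m * d)).card := by
        rw [Finset.card_product, Finset.card_range, card_remainders hgm ham,
          card_remainders hg ha, hord, mul_comm]

theorem card_filter_remainders_mul (hm : 0 < m) (hd : 0 < d) (hg : Nat.Coprime g (m * d))
    (ha : Nat.Coprime a (m * d)) (hord : ordg g (m * d) = d * ordg g m) (P : ℕ → Prop)
    [DecidablePred P] :
    {x ∈ remainders g a (m * d) | P x}.card =
      ∑ r ∈ remainders g a m, {n ∈ Finset.range d | P (r + m * n)}.card := by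
  have hinj : Set.InjOn (fun q : ℕ × ℕ => q.1 + m * q.2)
      (remainders g a m ×ˢ Finset.range d : Finset (ℕ × ℕ)) :=
    (injOn_add_mul m).mono fun q hq => lt_of_mem_remainders hm (Finset.mem_product.1 hq).1
  simp only [Finset.card_filter]
  rw [remainders_mul hm hd hg ha hord, Finset.sum_image hinj, Finset.sum_product]

end Remainders

/-! ### Frequencies -/

theorem div_mod_eq_iff_dvd {G m n s : ℕ} (hG : Nat.Coprime G m) (hn : G ∣ n) (hs : s < G) :
    n / m % G = s ↔ G ∣ m * s + n % m := by
  have hsum : m * (n / m) + n % m ≡ 0 [MOD G] := by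
    rw [Nat.div_add_mod]
    exact hn.modEq_zero_nat
  calc n / m % G = s ↔ s ≡ n / m [MOD G] := by
        rw [Nat.ModEq, Nat.mod_eq_of_lt hs, eq_comm]
    _ ↔ m * s + n % m ≡ m * (n / m) + n % m [MOD G] := by
        rw [Nat.ModEq.add_iff_right rfl, mul_modEq_mul_left_iff_of_coprime hG]
    _ ↔ G ∣ m * s + n % m := by
        rw [← Nat.modEq_zero_iff_dvd]
        exact ⟨fun h => h.trans hsum, fun h => h.trans hsum.symm⟩

theorem nu_eq_card_remainders {g b a j s : ℕ} (hgb : Nat.Coprime g b) (hab : Nat.Coprime a b)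
    (hs : s < g ^ j) (k : ℕ) :
    nu g b a j k s = {r ∈ remainders g a (b ^ k) | g ^ j ∣ b ^ k * s + r}.card := by
  have hgk : Nat.Coprime g (b ^ k) := hgb.pow_right k
  have hwindow : Finset.Icc j (ordg g (b ^ k) + j - 1) = Finset.Ico j (j + ordg g (b ^ k)) := by
    have := ordg_pos hgk
    ext i
    simp only [Finset.mem_Icc, Finset.mem_Ico]
    omega
  have hinj := injOn_mul_pow_mod hgk (hab.pow_right k) j
  rw [nu, hwindow, ← image_Ico_eq_remainders hgk j, Finset.filter_image,
    Finset.card_image_of_injOn (hinj.mono (Finset.coe_subset.2 (Finset.filter_subset _ _)))]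
  refine congrArg Finset.card (Finset.filter_congr fun i hi => ?_)
  exact div_mod_eq_iff_dvd (hgk.pow_left j)
    ((pow_dvd_pow g (Finset.mem_Ico.1 hi).1).mul_left a) hs

theorem card_filter_range_mul_dvd_add_mul {G m : ℕ} (hG : 0 < G) (hGm : Nat.Coprime G m)
    (c w : ℕ) : {n ∈ Finset.range (G * w) | G ∣ c + m * n}.card = w := by
  obtain ⟨v, hv⟩ : ∃ v, c + m * v ≡ 0 [MOD G] := by
    obtain ⟨v, -, hv⟩ := Nat.exists_mul_mod_eq_of_coprime (c * (G - 1)) hGm.symm hG.ne'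
    refine ⟨v, (show m * v ≡ c * (G - 1) [MOD G] from hv).add_left c |>.trans ?_⟩
    rw [Nat.modEq_zero_iff_dvd, ← mul_one_add, Nat.add_sub_cancel' (show 1 ≤ G from hG)]
    exact dvd_mul_left G c
  have hclass (n : ℕ) : G ∣ c + m * n ↔ n ≡ v [MOD G] := by
    rw [← mul_modEq_mul_left_iff_of_coprime hGm, ← Nat.ModEq.add_iff_left (Nat.ModEq.refl c),
      ← Nat.modEq_zero_iff_dvd]
    exact ⟨fun h => h.trans hv.symm, fun h => h.trans hv⟩
  simp only [hclass]
  rw [← Nat.count_eq_card_filter_range, Nat.count_modEq_card _ hG]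
  simp [hG]

theorem card_filter_range_mul_succ_dvd_add_mul {G m : ℕ} (hG : 0 < G) (hGm : Nat.Coprime G m)
    (c w : ℕ) :
    {n ∈ Finset.range (G * w + 1) | G ∣ c + m * n}.card = w + if G ∣ c then 1 else 0 := by
  have hpos : (∑ n ∈ Finset.range (G * w), if G ∣ c + m * (n + 1) then 1 else 0) = w := by
    simp only [← Finset.card_filter, mul_add_one, add_comm _ m, ← add_assoc]
    exact card_filter_range_mul_dvd_add_mul hG hGm (m + c) w
  rw [Finset.card_filter, Finset.sum_range_succ', hpos, mul_zero, add_zero]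

theorem nu_add {g b a j k t w s : ℕ} (hg : 2 ≤ g) (hgb : Nat.Coprime g b)
    (hab : Nat.Coprime a b) (hk : cg g b ≤ k) (hw : b ^ t = g ^ j * w + 1) (hs : s < g ^ j) :
    nu g b a j (k + t) s = nu g b a j k s + w * ordg g (b ^ k) := by
  have hG : 0 < g ^ j := Nat.pow_pos (by omega)
  have hk' : Nat.Coprime g (b ^ k) := hgb.pow_right k
  have hbt : 0 < b ^ t := by omega
  have hbk : 0 < b ^ k := pos_of_coprime (by omega) hk'
  have hword (x : ℕ) : g ^ j ∣ b ^ (k + t) * s + x ↔ g ^ j ∣ b ^ k * s + x := by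
    have hsplit : b ^ (k + t) * s + x = g ^ j * (w * b ^ k * s) + (b ^ k * s + x) := by
      rw [pow_add, hw]
      ring
    rw [hsplit, Nat.dvd_add_right (dvd_mul_right _ _)]
  have hlift (r : ℕ) : {n ∈ Finset.range (b ^ t) | g ^ j ∣ b ^ k * s + (r + b ^ k * n)}.card =
      w + if g ^ j ∣ b ^ k * s + r then 1 else 0 := by
    simp only [hw, ← add_assoc]
    exact card_filter_range_mul_succ_dvd_add_mul hG (hk'.pow_left j) _ w
  calc nu g b a j (k + t) s
      = {x ∈ remainders g a (b ^ k * b ^ t) | g ^ j ∣ b ^ k * s + x}.card := by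
        simp only [nu_eq_card_remainders hgb hab hs, hword, ← pow_add]
    _ = ∑ r ∈ remainders g a (b ^ k),
          {n ∈ Finset.range (b ^ t) | g ^ j ∣ b ^ k * s + (r + b ^ k * n)}.card := by
        refine card_filter_remainders_mul hbk hbt ?_ ?_ ?_ _ <;> rw [← pow_add]
        exacts [hgb.pow_right _, hab.pow_right _, ordg_pow_add_eq hg hgb hk t]
    _ = nu g b a j k s + w * ordg g (b ^ k) := by
        rw [Finset.sum_congr rfl fun r _ => hlift r, Finset.sum_add_distrib, Finset.sum_const,
          card_remainders hk' (hab.pow_right k), smul_eq_mul, mul_comm, add_comm,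
          ← Finset.card_filter, nu_eq_card_remainders hgb hab hs]

theorem frequency_difference_invariant_general {g b a j k t : ℕ} (hg : 2 ≤ g)
    (hgb : Nat.Coprime g b) (hab : Nat.Coprime a b) (hk : cg g b ≤ k)
    (ht : b ^ t ≡ 1 [MOD g ^ j]) :
    ∀ s : ℕ, s < g ^ j → ∀ s' : ℕ, s' < g ^ j →
      (nu g b a j k s : ℤ) - nu g b a j k s' = nu g b a j (k + t) s - nu g b a j (k + t) s' := by
  intro s hs s' hs'
  have hbt : 1 ≤ b ^ t := Nat.pow_pos (pos_of_coprime (by omega) hgb)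
  obtain ⟨w, hw⟩ := (Nat.modEq_iff_exists_eq_add hbt).1 ht.symm
  rw [add_comm] at hw
  rw [nu_add hg hgb hab hk hw hs, nu_add hg hgb hab hk hw hs']
  push_cast
  ring

/-- For `k ≥ c_g(b)` and `t₀ = ord_b(g^j)` (the multiplicative order of
`b` modulo `g^j`), frequency differences are invariant:
`ν_k(s) − ν_k(s') = ν_{k+t₀}(s) − ν_{k+t₀}(s')` for all `s, s' < g^j`. -/
theorem frequency_difference_invariant (g b a j k : ℕ) (hg : 2 ≤ g) (hb : 1 < b)
    (hbg : Nat.gcd b g = 1) (ha : 0 < a) (hab : Nat.gcd a b = 1) (hak : a < b ^ k)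
    (hj : 1 ≤ j) (hk : cg g b ≤ k) :
    ∀ s : ℕ, s < g ^ j → ∀ s' : ℕ, s' < g ^ j →
      (nu g b a j k s : ℤ) - (nu g b a j k s' : ℤ)
        = (nu g b a j (k + ordg b (g ^ j)) s : ℤ)
          - (nu g b a j (k + ordg b (g ^ j)) s' : ℤ) := by
  exact frequency_difference_invariant_general hg (Nat.Coprime.symm hbg) hab hk
    (pow_ordg_modEq_one b (g ^ j))
end

section
/- Let g ≥ 2 and b > 1 be integers with gcd(b,g) = 1, let a be a positive integer with gcd(a,b) = 1, and let j ≥ 1. Then for every s ∈ {0,…,g^j−1}, the relative frequency ν_k(s)/ord_g(b^k) of the j-word s in the enlarged repetend of a/b^k converges to 1/g^j as k → ∞. -/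
/-!
Put `M = b ^ k`, `T = φ(b ^ 2)` and `g ^ T = C + 1`. Every prime `p ∣ M` satisfies `p ^ 2 ∣ C`, so
lifting the exponent shows that `C + 1` has multiplicative order `q = M / d` modulo `M`, where
`d = gcd(M, C)`. For `c` coprime to `M` the `q` residues `c * (C + 1) ^ t` are therefore distinct,
and as they all agree modulo `d`, they are all the residues `c % d + d * t`: an arithmetic
progression, of which a proportion `1 / G`, up to `1 / q`, lies in any of the intervals
`[s M / G, (s + 1) M / G)`. Thus along each progression `i, i + T, i + 2 T, …` of `q` positions a
given word occurs with frequency `1 / g ^ j` up to `1 / q`. Averaging over `i` in a period gives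
the same bound for the repetend, and `1 / q = d / M ≤ C / b ^ k → 0`.
-/

open Finset

section LiftingTheExponent

-- The square is needed at `p = 2`, where lifting the exponent requires `4 ∣ C`.
theorem emultiplicity_add_one_pow_sub_one {p : ℕ} (hp : p.Prime) {C : ℤ} (hC : (p : ℤ) ^ 2 ∣ C)
    (n : ℕ) : emultiplicity (p : ℤ) ((C + 1) ^ n - 1) = emultiplicity (p : ℤ) (C * n) := by
  have hpC : (p : ℤ) ∣ C := (dvd_pow_self _ two_ne_zero).trans hC
  have hpx : ¬ (p : ℤ) ∣ C + 1 := fun h =>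
    (Nat.prime_iff_prime_int.1 hp).not_dvd_one ((dvd_add_right hpC).1 h)
  rw [emultiplicity_mul (Nat.prime_iff_prime_int.1 hp)]
  rcases hp.eq_two_or_odd' with rfl | hodd
  · simpa using Int.two_pow_sub_pow' (y := 1) n (by simpa using hC) hpx
  · simpa [Int.natCast_emultiplicity] using
      Int.emultiplicity_pow_sub_pow hp hodd (y := 1) (by simpa using hpC) hpx n

theorem natCast_dvd_add_one_pow_sub_one_iff {M : ℕ} {C : ℤ}
    (hC : ∀ p : ℕ, p.Prime → p ∣ M → (p : ℤ) ^ 2 ∣ C) (n : ℕ) :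
    (M : ℤ) ∣ (C + 1) ^ n - 1 ↔ (M : ℤ) ∣ C * n := by
  simp only [Int.natCast_dvd, Nat.dvd_iff_prime_pow_dvd_dvd _ M]
  refine forall₄_congr fun p e hp hpe => ?_
  rcases eq_or_ne e 0 with rfl | he
  · simp
  have hpC := hC p hp ((dvd_pow_self p he).trans hpe)
  rw [← Int.natCast_dvd, ← Int.natCast_dvd, Nat.cast_pow, pow_dvd_iff_le_emultiplicity,
    pow_dvd_iff_le_emultiplicity, emultiplicity_add_one_pow_sub_one hp hpC]

theorem orderOf_intCast_add_one {M : ℕ} {C : ℤ}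
    (hC : ∀ p : ℕ, p.Prime → p ∣ M → (p : ℤ) ^ 2 ∣ C) :
    orderOf (C + 1 : ZMod M) = addOrderOf (C : ZMod M) := by
  refine Nat.dvd_right_iff_eq.1 fun n => ?_
  have h := natCast_dvd_add_one_pow_sub_one_iff hC n
  simp only [← ZMod.intCast_zmod_eq_zero_iff_dvd] at h
  push_cast at h
  rw [orderOf_dvd_iff_pow_eq_one, addOrderOf_dvd_iff_nsmul_eq_zero, ← sub_eq_zero, h,
    nsmul_eq_mul, mul_comm]

theorem orderOf_natCast_add_one {M C : ℕ} (hM : M ≠ 0)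
    (hC : ∀ p : ℕ, p.Prime → p ∣ M → p ^ 2 ∣ C) :
    orderOf (C + 1 : ZMod M) = M / M.gcd C := by
  rw [← ZMod.addOrderOf_coe C hM]
  exact_mod_cast orderOf_intCast_add_one (C := C) fun p hp hpM => mod_cast hC p hp hpM

end LiftingTheExponent

section LeadDigit

/-- The first digit in base `G` of the fractional part of `n / M`. With `G = g ^ j` this is the
word formed by the first `j` base-`g` digits. -/
def leadDigit (G M n : ℕ) : ℕ := G * (n % M) / M

theorem mul_div_mod_eq_leadDigit (G M n : ℕ) : G * n / M % G = leadDigit G M n := by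
  rw [← Nat.mod_mul_right_div_self, mul_comm M G, Nat.mul_mod_mul_left, leadDigit]

theorem leadDigit_congr {G M n n' : ℕ} (h : n ≡ n' [MOD M]) :
    leadDigit G M n = leadDigit G M n' := by
  rw [leadDigit, leadDigit, h]

theorem leadDigit_lt {G M : ℕ} (hG : 0 < G) (hM : 0 < M) (n : ℕ) : leadDigit G M n < G :=
  (Nat.div_lt_iff_lt_mul hM).2 (Nat.mul_lt_mul_of_pos_left (Nat.mod_lt n hM) hG)

theorem leadDigit_mod_add_mul {d q t : ℕ} (hd : 0 < d) (ht : t < q) (G c : ℕ) :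
    leadDigit G (d * q) (c % d + d * t) = (leadDigit G d c + G * t) / q := by
  have hlt : c % d + d * t < d * q := by
    calc c % d + d * t < d + d * t := Nat.add_lt_add_right (Nat.mod_lt c hd) _
      _ = d * (t + 1) := by ring
      _ ≤ d * q := Nat.mul_le_mul_left d ht
  rw [leadDigit, Nat.mod_eq_of_lt hlt, ← Nat.div_div_eq_div_mul, leadDigit,
    ← Nat.add_mul_div_left _ _ hd]
  ring_nf

end LeadDigit

section Counting

theorem abs_natCast_ceil_sub_ceil_sub_le {x y : ℝ} (hx : -1 < x) (hxy : x ≤ y) :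
    |((⌈y⌉₊ - ⌈x⌉₊ : ℕ) : ℝ) - (y - x)| ≤ 1 := by
  rw [Nat.cast_sub (Nat.ceil_mono hxy), abs_le]
  have hx' := Nat.ceil_lt_add_one_of_gt_neg_one hx
  have hy' := Nat.ceil_lt_add_one_of_gt_neg_one (hx.trans_le hxy)
  constructor <;> linarith [Nat.le_ceil x, Nat.le_ceil y]

theorem abs_card_filter_add_mul_div_sub_le {G q u s : ℕ} (hu : u < G) (hs : s < G) (hq : 0 < q) :
    |(#{t ∈ range q | (u + G * t) / q = s} : ℝ) - q / G| ≤ 1 := by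
  have hG : (0 : ℝ) < G := by exact_mod_cast u.zero_le.trans_lt hu
  have hu' : (u : ℝ) < G := by exact_mod_cast hu
  set x : ℝ := (s * q - u) / G with hx
  set y : ℝ := ((s + 1) * q - u) / G with hy
  have hset : {t ∈ range q | (u + G * t) / q = s} = Ico ⌈x⌉₊ ⌈y⌉₊ := by
    ext t
    have hxt : ⌈x⌉₊ ≤ t ↔ s * q ≤ u + G * t := by
      rw [Nat.ceil_le, hx, div_le_iff₀ hG, sub_le_iff_le_add', mul_comm (t : ℝ)]
      exact_mod_cast Iff.rfl
    have hyt : t < ⌈y⌉₊ ↔ u + G * t < (s + 1) * q := by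
      rw [Nat.lt_ceil, hy, lt_div_iff₀ hG, lt_sub_iff_add_lt', mul_comm (t : ℝ)]
      exact_mod_cast Iff.rfl
    have htq : u + G * t < (s + 1) * q → t < q := fun h =>
      Nat.lt_of_mul_lt_mul_left
        ((Nat.le_add_left _ u).trans_lt (h.trans_le (Nat.mul_le_mul_right q hs)))
    rw [mem_filter, mem_range, mem_Ico, hxt, hyt, Nat.div_eq_iff hq]
    grind
  have hyx : y - x = q / G := by rw [hx, hy]; ring
  have hx_gt : -1 < x := by
    rw [hx, lt_div_iff₀ hG]
    have : (0 : ℝ) ≤ s * q := by positivity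
    linarith
  have hxy : x ≤ y := sub_nonneg.1 (hyx ▸ by positivity)
  rw [hset, Nat.card_Ico, ← hyx]
  exact abs_natCast_ceil_sub_ceil_sub_le hx_gt hxy

theorem card_filter_range_add (p : ℕ → Prop) [DecidablePred p] (N c : ℕ) :
    #{i ∈ range N | p (i + c)} = #{i ∈ Ico c (c + N) | p i} := by
  have hIco : Ico c (c + N) = (range N).map (addRightEmbedding c) := by
    rw [range_eq_Ico, map_add_right_Ico, zero_add, add_comm]
  rw [hIco, filter_map, card_map]
  rfl

theorem sum_card_filter_add_of_periodic {ι : Type*} {p : ℕ → Prop} [DecidablePred p] {N : ℕ}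
    (hp : Function.Periodic p N) (S : Finset ι) (u : ι → ℕ) :
    ∑ i ∈ range N, #{t ∈ S | p (i + u t)} = #S * N.count p := by
  have hshift (c : ℕ) : #{i ∈ range N | p (i + c)} = N.count p := by
    rw [card_filter_range_add, Nat.filter_Ico_card_eq_of_periodic c N p hp]
  calc ∑ i ∈ range N, #{t ∈ S | p (i + u t)}
      = ∑ t ∈ S, #{i ∈ range N | p (i + u t)} :=
        sum_card_bipartiteAbove_eq_sum_card_bipartiteBelow _
    _ = #S * N.count p := by simp [hshift]

theorem abs_count_div_sub_le_of_periodic {ι : Type*} {p : ℕ → Prop} [DecidablePred p] {N : ℕ}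
    {S : Finset ι} {u : ι → ℕ} {δ ε : ℝ} (hN : 0 < N) (hS : S.Nonempty)
    (hp : Function.Periodic p N) (h : ∀ i, |(#{t ∈ S | p (i + u t)} : ℝ) - #S * δ| ≤ ε) :
    |(N.count p : ℝ) / N - δ| ≤ ε / #S := by
  have hN' : (0 : ℝ) < N := by exact_mod_cast hN
  have hS' : (0 : ℝ) < #S := by exact_mod_cast hS.card_pos
  have hsum : ∑ i ∈ range N, ((#{t ∈ S | p (i + u t)} : ℝ) - #S * δ) =
      N * #S * (N.count p / N - δ) := by
    rw [sum_sub_distrib, ← Nat.cast_sum, sum_card_filter_add_of_periodic hp S u, sum_const,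
      card_range, nsmul_eq_mul, Nat.cast_mul]
    field_simp
  have hbound : N * (#S * |(N.count p : ℝ) / N - δ|) ≤ N * ε := by
    calc N * (#S * |(N.count p : ℝ) / N - δ|)
        = |∑ i ∈ range N, ((#{t ∈ S | p (i + u t)} : ℝ) - #S * δ)| := by
          rw [hsum, abs_mul, abs_of_pos (mul_pos hN' hS'), mul_assoc]
      _ ≤ ∑ i ∈ range N, |(#{t ∈ S | p (i + u t)} : ℝ) - #S * δ| := abs_sum_le_sum_abs _ _
      _ ≤ N * ε := by simpa using sum_le_card_nsmul (range N) _ ε fun i _ => h i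
  exact (le_div_iff₀' hS').2 (le_of_mul_le_mul_left hbound hN')

end Counting

section Orbits

theorem injOn_mul_pow_mod_s18 {M q x c : ℕ} (hq : q ≤ orderOf (x : ZMod M)) (hc : c.Coprime M) :
    Set.InjOn (fun t => c * x ^ t % M) (range q) := by
  intro t ht t' ht' h
  rw [coe_range, Set.mem_Iio] at ht ht'
  have hpow : x ^ t ≡ x ^ t' [MOD M] := Nat.ModEq.cancel_left_of_coprime hc.symm h
  exact pow_injOn_Iio_orderOf (ht.trans_le hq) (ht'.trans_le hq)
    (by simpa using (ZMod.natCast_eq_natCast_iff _ _ _).2 hpow)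

theorem image_mul_pow_mod_eq {d q x c : ℕ} (hd : 0 < d) (hx : x ≡ 1 [MOD d])
    (hq : q ≤ orderOf (x : ZMod (d * q))) (hc : c.Coprime (d * q)) :
    (range q).image (fun t => c * x ^ t % (d * q)) =
      (range q).image (fun t => c % d + d * t) := by
  refine eq_of_subset_of_card_le (image_subset_iff.2 fun t ht => ?_) ?_
  · have hr : c * x ^ t % (d * q) % d = c % d := by
      rw [Nat.mod_mul_right_mod]
      simpa [Nat.ModEq] using (hx.pow t).mul_left c
    refine mem_image.2 ⟨c * x ^ t % (d * q) / d, mem_range.2 ?_, ?_⟩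
    · have hq0 : 0 < q := (Nat.zero_le t).trans_lt (mem_range.1 ht)
      exact Nat.div_lt_of_lt_mul (Nat.mod_lt _ (Nat.mul_pos hd hq0))
    · rw [← hr, Nat.mod_add_div]
  · rw [card_image_of_injOn (injOn_mul_pow_mod_s18 hq hc)]
    exact card_image_le

theorem card_filter_mul_pow_mod_eq {d q x c : ℕ} (hd : 0 < d) (hx : x ≡ 1 [MOD d])
    (hq : q ≤ orderOf (x : ZMod (d * q))) (hc : c.Coprime (d * q))
    (P : ℕ → Prop) [DecidablePred P] :
    #{t ∈ range q | P (c * x ^ t % (d * q))} = #{t ∈ range q | P (c % d + d * t)} := by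
  have hinj : Set.InjOn (fun t => c % d + d * t) (range q) := fun t _ t' _ h =>
    Nat.eq_of_mul_eq_mul_left hd (Nat.add_left_cancel h)
  have himage := congrArg (fun A => #{r ∈ A | P r}) (image_mul_pow_mod_eq hd hx hq hc)
  simp only [filter_image] at himage
  rwa [card_image_of_injOn ((injOn_mul_pow_mod_s18 hq hc).mono (filter_subset _ _)),
    card_image_of_injOn (hinj.mono (filter_subset _ _))] at himage

theorem abs_card_filter_leadDigit_mul_pow_sub_le {G d q x c s : ℕ} (hd : 0 < d) (hq0 : 0 < q)
    (hx : x ≡ 1 [MOD d]) (hq : q ≤ orderOf (x : ZMod (d * q))) (hc : c.Coprime (d * q))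
    (hs : s < G) :
    |(#{t ∈ range q | leadDigit G (d * q) (c * x ^ t) = s} : ℝ) - q / G| ≤ 1 := by
  have hcard : #{t ∈ range q | leadDigit G (d * q) (c * x ^ t) = s} =
      #{t ∈ range q | (leadDigit G d c + G * t) / q = s} := by
    calc #{t ∈ range q | leadDigit G (d * q) (c * x ^ t) = s}
        = #{t ∈ range q | leadDigit G (d * q) (c * x ^ t % (d * q)) = s} := by
          simp only [leadDigit_congr (Nat.mod_modEq _ _)]
      _ = #{t ∈ range q | leadDigit G (d * q) (c % d + d * t) = s} :=
          card_filter_mul_pow_mod_eq hd hx hq hc (fun r => leadDigit G (d * q) r = s)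
      _ = #{t ∈ range q | (leadDigit G d c + G * t) / q = s} :=
          congrArg card <| filter_congr fun t ht => by
            rw [leadDigit_mod_add_mul hd (mem_range.1 ht)]
  rw [hcard]
  exact abs_card_filter_add_mul_div_sub_le
    (leadDigit_lt (s.zero_le.trans_lt hs) hd c) hs hq0

end Orbits

section Frequency

theorem abs_count_leadDigit_div_sub_le {G M g a N T C s : ℕ} (hM : 0 < M) (hN : 0 < N)
    (hgN : g ^ N ≡ 1 [MOD M]) (ha : a.Coprime M) (hT : g ^ T = C + 1)
    (hC : ∀ p : ℕ, p.Prime → p ∣ M → p ^ 2 ∣ C) (hs : s < G) :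
    |(N.count (fun i => leadDigit G M (a * g ^ i) = s) : ℝ) / N - 1 / G| ≤ M.gcd C / M := by
  have hg : g.Coprime M := (Nat.coprime_pow_left_iff hN g M).1 (by simpa using hgN.gcd_eq)
  have hd : 0 < M.gcd C := Nat.gcd_pos_of_pos_left C hM
  obtain ⟨q, hMq⟩ := M.gcd_dvd_left C
  have hq : 0 < q := Nat.pos_of_mul_pos_left (hMq ▸ hM)
  have hx : g ^ T ≡ 1 [MOD M.gcd C] := by
    simpa [hT] using ((Nat.modEq_zero_iff_dvd.2 (M.gcd_dvd_right C)).add_right 1)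
  have hord : q ≤ orderOf ((g ^ T : ℕ) : ZMod M) := by
    rw [hT, Nat.cast_add, Nat.cast_one, orderOf_natCast_add_one hM.ne' hC]
    exact (Nat.div_eq_of_eq_mul_right hd hMq).ge
  have hper : Function.Periodic (fun i => leadDigit G M (a * g ^ i) = s) N := fun i => by
    have hi : a * g ^ (i + N) ≡ a * g ^ i [MOD M] := by
      simpa [pow_add] using (hgN.mul_left (g ^ i)).mul_left a
    simp only [leadDigit_congr hi]
  have hprog (i : ℕ) : |(#{t ∈ range q | leadDigit G M (a * g ^ (i + T * t)) = s} : ℝ) -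
      #(range q) * (1 / G)| ≤ 1 := by
    have hai : (a * g ^ i).Coprime M := ha.mul_left (hg.pow_left i)
    rw [hMq] at hord hai
    simpa [← hMq, pow_add, pow_mul, mul_assoc, div_eq_mul_inv] using
      abs_card_filter_leadDigit_mul_pow_sub_le hd hq hx hord hai hs
  have hrate : (1 : ℝ) / #(range q) = M.gcd C / M := by
    have hd' : (M.gcd C : ℝ) ≠ 0 := by exact_mod_cast hd.ne'
    have hM' : (M : ℝ) = M.gcd C * q := by exact_mod_cast hMq
    rw [card_range, hM', ← div_div, div_self hd']
  rw [← hrate]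
  exact abs_count_div_sub_le_of_periodic hN (nonempty_range_iff.2 hq.ne') hper hprog

end Frequency

section Repetend

theorem ordg_spec {g m : ℕ} (hm : 0 < m) (hgm : g.Coprime m) :
    0 < ordg g m ∧ g ^ ordg g m ≡ 1 [MOD m] :=
  Nat.sInf_mem (s := {n : ℕ | 0 < n ∧ g ^ n ≡ 1 [MOD m]})
    ⟨m.totient, Nat.totient_pos.2 hm, Nat.ModEq.pow_totient hgm⟩

theorem nu_eq_count {g b k : ℕ} (hN : 0 < ordg g (b ^ k)) (a j s : ℕ) :
    nu g b a j k s =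
      (ordg g (b ^ k)).count (fun i => leadDigit (g ^ j) (b ^ k) (a * g ^ i) = s) := by
  have hIcc : Icc j (ordg g (b ^ k) + j - 1) = Ico j (j + ordg g (b ^ k)) := by
    ext i
    simp only [mem_Icc, mem_Ico]
    omega
  rw [nu, hIcc, ← card_filter_range_add, Nat.count_eq_card_filter_range]
  refine congrArg card (filter_congr fun i _ => ?_)
  rw [← mul_div_mod_eq_leadDigit, pow_add, ← mul_assoc, mul_comm (g ^ j)]

theorem abs_nu_div_ordg_sub_le {g b a j s : ℕ} (hg : 2 ≤ g) (hb : 0 < b)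
    (hgb : g.Coprime b) (hab : a.Coprime b) (hs : s < g ^ j) (k : ℕ) :
    |(nu g b a j k s : ℝ) / ordg g (b ^ k) - 1 / (g : ℝ) ^ j| ≤
      ((g : ℝ) ^ (b ^ 2).totient - 1) / (b : ℝ) ^ k := by
  have hM : 0 < b ^ k := pow_pos hb k
  obtain ⟨hN, hgN⟩ := ordg_spec hM (hgb.pow_right k)
  have hT : 1 < g ^ (b ^ 2).totient :=
    Nat.one_lt_pow (Nat.totient_pos.2 (pow_pos hb 2)).ne' hg
  obtain ⟨C, hC⟩ : ∃ C, g ^ (b ^ 2).totient = C + 1 := ⟨_, (Nat.sub_add_cancel hT.le).symm⟩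
  have hbC : b ^ 2 ∣ C := by
    simpa [hC] using
      (Nat.modEq_iff_dvd' hT.le).1 (Nat.ModEq.pow_totient (hgb.pow_right 2)).symm
  have hpC (p : ℕ) (hp : p.Prime) (hpM : p ∣ b ^ k) : p ^ 2 ∣ C :=
    (pow_dvd_pow_of_dvd (hp.dvd_of_dvd_pow hpM) 2).trans hbC
  have hgcd : (b ^ k).gcd C ≤ C := Nat.gcd_le_right _ (by omega)
  have hC' : (g : ℝ) ^ (b ^ 2).totient - 1 = C := by
    rw [sub_eq_iff_eq_add]
    exact_mod_cast hC
  rw [nu_eq_count hN, hC']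
  calc _ ≤ ((b ^ k).gcd C : ℝ) / (b ^ k : ℕ) := by
        simpa using abs_count_leadDigit_div_sub_le hM hN hgN (hab.pow_right k) hC hpC hs
    _ ≤ (C : ℝ) / (b : ℝ) ^ k := by
        rw [Nat.cast_pow]
        gcongr

end Repetend

/-- For every `j`-word `s < g^j`, the relative frequency
`ν_k(s)/ord_g(b^k)` of `s` in the enlarged repetend of `a/b^k` converges to `1/g^j`
as `k → ∞`. -/
theorem relative_frequency_tendsto (g b a j : ℕ) (hg : 2 ≤ g) (hb : 1 < b)
    (hbg : Nat.gcd b g = 1) (ha : 0 < a) (hab : Nat.gcd a b = 1) (hj : 1 ≤ j) :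
    ∀ s : ℕ, s < g ^ j →
      Filter.Tendsto (fun k : ℕ => (nu g b a j k s : ℝ) / (ordg g (b ^ k) : ℝ))
        Filter.atTop (nhds (1 / (g : ℝ) ^ j)) := by
  intro s hs
  have hrate : Filter.Tendsto (fun k : ℕ => ((g : ℝ) ^ (b ^ 2).totient - 1) / (b : ℝ) ^ k)
      Filter.atTop (nhds 0) :=
    (tendsto_pow_atTop_atTop_of_one_lt (by exact_mod_cast hb)).const_div_atTop _
  refine tendsto_iff_dist_tendsto_zero.2 (squeeze_zero (fun _ => dist_nonneg) (fun k => ?_) hrate)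
  rw [Real.dist_eq]
  exact abs_nu_div_ordg_sub_le hg (by omega) (Nat.Coprime.symm hbg) hab hs k
end
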